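/- Let X be a complex Banach space, T ∈ L(X), and P ∈ L(X) with P² − P compact and PT − TP compact. Then there exists W ∈ L(X) with W(T + P) − I and (T + P)W − I compact if and only if both of the following hold: there exists U ∈ L(X) with UP − PU compact and U(T + P) − I compact, and there exists V ∈ L(X) with VP − PV compact and (T + P)V − I compact. (In other words, T is P-Fredholm if and only if T is both left semi-P-Fredholm and right semi-P-Fredholm.) -/

import Mathlib

/-! In the Calkin algebra, `p = Π(P)` commutes with `Π(T)`, hence with `a = Π(T) + p`. In any
monoid, an inverse of `a` commutes with everything that commutes with `a`, so it is a left and a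
right inverse commuting with `p`; conversely, a left and a right inverse of `a` coincide. -/

theorem isUnit_iff_exists_commute_left_inv_and_right_inv {M : Type*} [Monoid M] {a p : M}
    (hpa : Commute p a) :
    IsUnit a ↔ (∃ u, Commute u p ∧ u * a = 1) ∧ ∃ v, Commute v p ∧ a * v = 1 := by
  constructor
  · rintro ⟨a, rfl⟩
    have inv_commute : Commute (↑a⁻¹ : M) p := hpa.symm.units_inv_left
    exact ⟨⟨_, inv_commute, a.inv_mul⟩, ⟨_, inv_commute, a.mul_inv⟩⟩
  · rintro ⟨⟨u, -, hu⟩, ⟨v, -, hv⟩⟩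
    exact isUnit_iff_exists_and_exists.2 ⟨⟨v, hv⟩, ⟨u, hu⟩⟩

section Calkin

variable (R X : Type*) [Ring R] [AddCommGroup X] [TopologicalSpace X] [IsTopologicalAddGroup X]
  [Module R X]

/-- The two-sided ideal of compact operators in the ring of continuous linear endomorphisms
of `X`; the Calkin algebra is the quotient by it. -/
def compactOperatorIdeal : TwoSidedIdeal (X →L[R] X) :=
  .mk' {A | IsCompactOperator A} isCompactOperator_zero (fun hA hB => hA.add hB)
    (fun hA => hA.neg) (fun {A _} hB => hB.clm_comp A) (fun {_ B} hA => hA.comp_clm B)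

/-- The Calkin algebra `L(X)/K(X)`, as a ring: only its algebraic structure is
encoded, not the quotient norm. -/
abbrev CalkinAlgebra : Type _ :=
  (compactOperatorIdeal R X).ringCon.Quotient

variable {R X}

theorem mem_compactOperatorIdeal {A : X →L[R] X} :
    A ∈ compactOperatorIdeal R X ↔ IsCompactOperator ⇑A :=
  TwoSidedIdeal.mem_mk' ..

/-- The quotient map `Π : L(X) → L(X)/K(X)`. -/
def toCalkin : (X →L[R] X) →+* CalkinAlgebra R X :=
  (compactOperatorIdeal R X).ringCon.mk'

theorem toCalkin_surjective : Function.Surjective (toCalkin : (X →L[R] X) → CalkinAlgebra R X) :=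
  RingCon.mk'_surjective _

theorem toCalkin_eq_toCalkin_iff {A B : X →L[R] X} :
    toCalkin A = toCalkin B ↔ IsCompactOperator ⇑(A - B) :=
  (RingCon.eq _).trans <| (TwoSidedIdeal.rel_iff _ A B).trans mem_compactOperatorIdeal

theorem toCalkin_mul_eq_one_iff {A B : X →L[R] X} :
    toCalkin A * toCalkin B = 1 ↔ IsCompactOperator ⇑(A * B - 1) := by
  rw [← map_mul, ← map_one toCalkin, toCalkin_eq_toCalkin_iff]

theorem commute_toCalkin_iff {A B : X →L[R] X} :
    Commute (toCalkin A) (toCalkin B) ↔ IsCompactOperator ⇑(A * B - B * A) := by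
  rw [commute_iff_eq, ← map_mul, ← map_mul, toCalkin_eq_toCalkin_iff]

theorem isUnit_toCalkin_iff {A : X →L[R] X} :
    IsUnit (toCalkin A) ↔ ∃ W : X →L[R] X,
      IsCompactOperator ⇑(W * A - 1) ∧ IsCompactOperator ⇑(A * W - 1) := by
  simp only [isUnit_iff_exists, toCalkin_surjective.exists, toCalkin_mul_eq_one_iff, and_comm]

end Calkin

theorem P_Fredholm_iff_left_and_right_general
    {R X : Type*} [Ring R] [AddCommGroup X] [TopologicalSpace X] [IsTopologicalAddGroup X]
    [Module R X] (T P : X →L[R] X) (hPT : IsCompactOperator ⇑(P * T - T * P)) :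
    (∃ W : X →L[R] X, IsCompactOperator ⇑(W * (T + P) - 1) ∧
        IsCompactOperator ⇑((T + P) * W - 1)) ↔
      ((∃ U : X →L[R] X, IsCompactOperator ⇑(U * P - P * U) ∧
          IsCompactOperator ⇑(U * (T + P) - 1)) ∧
        (∃ V : X →L[R] X, IsCompactOperator ⇑(V * P - P * V) ∧
          IsCompactOperator ⇑((T + P) * V - 1))) := by
  have commute_add : Commute (toCalkin P) (toCalkin (T + P)) := by
    rw [map_add]
    exact (commute_toCalkin_iff.2 hPT).add_right (Commute.refl _)
  rw [← isUnit_toCalkin_iff, isUnit_iff_exists_commute_left_inv_and_right_inv commute_add]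
  simp only [toCalkin_surjective.exists, commute_toCalkin_iff, toCalkin_mul_eq_one_iff]

/-- **P-Fredholm = left semi-P-Fredholm ∧ right semi-P-Fredholm.**
Given `P ∈ L(X)` with `P² − P` and `PT − TP` compact (so that `p = Π(P)` is an idempotent
of the Calkin algebra commuting with `Π(T)`), `T` is `P`-Fredholm (i.e. `Π(T) + p` is
invertible) if and only if `T` is both left and right semi-`P`-Fredholm. -/
theorem P_Fredholm_iff_left_and_right
    {X : Type*} [NormedAddCommGroup X] [NormedSpace ℂ X] [CompleteSpace X]
    (T P : X →L[ℂ] X) (hP : IsCompactOperator ⇑(P * P - P))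
    (hPT : IsCompactOperator ⇑(P * T - T * P)) :
    (∃ W : X →L[ℂ] X, IsCompactOperator ⇑(W * (T + P) - 1) ∧
        IsCompactOperator ⇑((T + P) * W - 1)) ↔
      ((∃ U : X →L[ℂ] X, IsCompactOperator ⇑(U * P - P * U) ∧
          IsCompactOperator ⇑(U * (T + P) - 1)) ∧
        (∃ V : X →L[ℂ] X, IsCompactOperator ⇑(V * P - P * V) ∧
          IsCompactOperator ⇑((T + P) * V - 1))) :=
  P_Fredholm_iff_left_and_right_general T P hPT
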